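/- Let n ≥ 1, let g be an invertible 2n×2n real matrix, let X be a 2n×2n real antisymmetric matrix, and let s ∈ ℂⁿ satisfy Re(s_j − s_{j+1}) ≥ 2 for all j = 1,…,n−1 (with s_{n+1} := −n−1). Then ∫_{O(2n)} f_n(s, g k X kᵀ gᵀ) d*k = Ψ_n(s, g gᵀ) · f_n(s, X). -/

import Mathlib

open MeasureTheory Matrix
open scoped BigOperators

noncomputable section

instance matrixMeasurableSpace {l : Type*} [Fintype l] : MeasurableSpace (Matrix l l ℝ) :=
  inferInstanceAs (MeasurableSpace (l → l → ℝ))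

/-- The orthogonal group `O(m)` as a subtype of `m × m` real matrices. -/
abbrev OG (m : ℕ) := Matrix.orthogonalGroup (Fin m) ℝ

/-- `t ^ w` for a real `t ≥ 0` and complex `w`, with the convention `0 ^ w = 0`. -/
def cpw (t : ℝ) (w : ℂ) : ℂ := if t = 0 then 0 else Complex.exp (w * Real.log t)

/-- The `2n × 2n` real antisymmetric matrix `D(a) = diag(a₁ J, …, aₙ J)`,
`J = [[0,1],[-1,0]]`. -/
def Dmat {n : ℕ} (a : Fin n → ℝ) : Matrix (Fin (2 * n)) (Fin (2 * n)) ℝ :=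
  Matrix.of fun i j =>
    if i.val / 2 = j.val / 2 then
      a ⟨i.val / 2, by have := i.isLt; omega⟩ *
        (if i.val % 2 = 0 ∧ j.val % 2 = 1 then 1
          else if i.val % 2 = 1 ∧ j.val % 2 = 0 then -1 else 0)
    else 0

/-- Vandermonde product `Δ_m(x) = ∏_{j<k} (x_k - x_j)`. -/
def vdm {m : ℕ} {R : Type*} [CommRing R] (x : Fin m → R) : R :=
  ∏ p ∈ Finset.univ.filter (fun p : Fin m × Fin m => p.1 < p.2), (x p.2 - x p.1)

/-- `s_{n+1} := -n-1` convention: the `j`-th exponent `(s_j - s_{j+1})/2 - 1`. -/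
def expo (n : ℕ) (s : Fin n → ℂ) (j : Fin n) : ℂ :=
  (s j - (if h : j.val + 1 < n then s ⟨j.val + 1, h⟩ else -(n : ℂ) - 1)) / 2 - 1

/-- The spherical-type group integral
`f_n(s,X) = ∫_{O(2n)} ∏_j det((kXkᵀ)_{[2j]})^{(s_j-s_{j+1})/2-1} d*k`. -/
def sphInt (n : ℕ) (μ : Measure (OG (2 * n))) (s : Fin n → ℂ)
    (X : Matrix (Fin (2 * n)) (Fin (2 * n)) ℝ) : ℂ :=
  ∫ k : OG (2 * n), ∏ j : Fin n,
    cpw ((((k : Matrix (Fin (2 * n)) (Fin (2 * n)) ℝ) * X *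
        (k : Matrix (Fin (2 * n)) (Fin (2 * n)) ℝ)ᵀ).submatrix
          (Fin.castLE (by have := j.isLt; omega : 2 * (j.val + 1) ≤ 2 * n))
          (Fin.castLE (by have := j.isLt; omega : 2 * (j.val + 1) ≤ 2 * n))).det)
      (expo n s j) ∂μ

/-! For `M` invertible there is a lower triangular `T` with `q = T M` orthogonal. Conjugation by `T`
multiplies each leading principal minor by the square of that minor of `T`, so a product `p` of
powers of leading minors satisfies `p (M A Mᵀ) = p (M Mᵀ) p (q A qᵀ)`. Take `M = h g` and
`A = k X kᵀ` with `h` fixed: left invariance of the measure in `k` absorbs `q`, and what remains is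
`p (h g gᵀ hᵀ)` times the integral for `X`. The same factorization of the absolute values
justifies exchanging the two integrals. -/

lemma cpw_one (w : ℂ) : cpw 1 w = 1 := by simp [cpw]

lemma cpw_mul (a b : ℝ) (w : ℂ) : cpw (a * b) w = cpw a w * cpw b w := by
  unfold cpw
  by_cases ha : a = 0
  · simp [ha]
  by_cases hb : b = 0
  · simp [hb]
  rw [if_neg (mul_ne_zero ha hb), if_neg ha, if_neg hb, ← Complex.exp_add, Real.log_mul ha hb]
  push_cast
  ring_nf

lemma cpw_abs (t : ℝ) (w : ℂ) : cpw |t| w = cpw t w := by simp [cpw]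

lemma measurable_cpw (w : ℂ) : Measurable fun t : ℝ => cpw t w :=
  Measurable.ite (measurableSet_singleton 0) measurable_const (by fun_prop)

lemma continuousAt_cpw {t : ℝ} (ht : t ≠ 0) (w : ℂ) : ContinuousAt (fun t => cpw t w) t := by
  have hexp : ContinuousAt (fun t : ℝ => Complex.exp (w * Real.log t)) t := by
    fun_prop (disch := assumption)
  refine hexp.congr ?_
  filter_upwards [eventually_ne_nhds ht] with u hu
  simp [cpw, hu]

lemma norm_cpw_le (t : ℝ) (w : ℂ) : ‖cpw t w‖ ≤ |t| ^ w.re := by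
  unfold cpw
  split_ifs with ht
  · simpa using Real.rpow_nonneg (abs_nonneg t) w.re
  · rw [Complex.norm_exp, Real.rpow_def_of_pos (abs_pos.mpr ht)]
    simp [mul_comm]

section PrincipalMinor

variable {n R : Type*} [DecidableEq n] [CommRing R]

/-- The principal minor of `A` with rows and columns in `S`. -/
def principalMinor (S : Finset n) (A : Matrix n n R) : R :=
  (A.submatrix ((↑) : S → n) (↑)).det

lemma principalMinor_one (S : Finset n) : principalMinor S (1 : Matrix n n R) = 1 := by
  rw [principalMinor, submatrix_one _ Subtype.val_injective, det_one]

lemma principalMinor_transpose (S : Finset n) (A : Matrix n n R) :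
    principalMinor S Aᵀ = principalMinor S A := by
  rw [principalMinor, ← transpose_submatrix, det_transpose, principalMinor]

lemma principalMinor_univ [Fintype n] (A : Matrix n n R) :
    principalMinor Finset.univ A = A.det :=
  det_submatrix_equiv_self (Equiv.subtypeUnivEquiv Finset.mem_univ) A

lemma continuous_principalMinor [TopologicalSpace R] [IsTopologicalRing R] (S : Finset n) :
    Continuous fun A : Matrix n n R => principalMinor S A := by
  unfold principalMinor
  fun_prop

lemma principalMinor_pos_of_posDef {A : Matrix n n ℝ} (hA : A.PosDef) (S : Finset n) :
    0 < principalMinor S A :=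
  (hA.submatrix Subtype.val_injective).det_pos

lemma principalMinor_mul_of_isLowerTriangular {n : Type*} [Fintype n] [LinearOrder n]
    {S : Finset n} (hS : IsLowerSet (S : Set n)) {T : Matrix n n R} (hT : T.IsLowerTriangular)
    (A : Matrix n n R) : principalMinor S (T * A) = principalMinor S T * principalMinor S A := by
  rw [principalMinor, principalMinor, principalMinor, ← det_mul]
  congr 1
  ext i j
  simp only [submatrix_apply, mul_apply]
  rw [Finset.sum_coe_sort S fun k => T i k * A k j]
  refine (Finset.sum_subset S.subset_univ fun k _ hk => ?_).symm
  have hik : (i : n) < k := lt_of_not_ge fun hki => hk (hS hki i.2)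
  rw [hT (OrderDual.toDual_lt_toDual.mpr hik), zero_mul]

lemma principalMinor_conj_of_isLowerTriangular {n : Type*} [Fintype n] [LinearOrder n]
    {S : Finset n} (hS : IsLowerSet (S : Set n)) {T : Matrix n n R} (hT : T.IsLowerTriangular)
    (A : Matrix n n R) :
    principalMinor S (T * A * Tᵀ) = principalMinor S T ^ 2 * principalMinor S A :=
  calc
    principalMinor S (T * A * Tᵀ) = principalMinor S T * principalMinor S (T * Aᵀ)ᵀ := by
      rw [Matrix.mul_assoc, principalMinor_mul_of_isLowerTriangular hS hT, transpose_mul,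
        transpose_transpose]
    _ = principalMinor S T ^ 2 * principalMinor S A := by
      rw [principalMinor_transpose, principalMinor_mul_of_isLowerTriangular hS hT,
        principalMinor_transpose]
      ring

end PrincipalMinor

section Orthogonalization

open scoped ComplexOrder

variable {n 𝕜 : Type*} [Fintype n] [LinearOrder n] [LocallyFiniteOrderBot n] [RCLike 𝕜]

lemma ldl_diagEntries_pos {A : Matrix n n 𝕜} (hA : A.PosDef) (i : n) :
    0 < LDL.diagEntries hA i := by
  have hdiag : (LDL.diag hA).PosDef := by
    rw [LDL.diag_eq_lowerInv_conj]
    exact hA.mul_mul_conjTranspose_same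
      (vecMul_injective_of_isUnit (isUnit_of_invertible (LDL.lowerInv hA)))
  exact posDef_diagonal_iff.mp hdiag i

lemma exists_isLowerTriangular_conj_eq_one {A : Matrix n n 𝕜} (hA : A.PosDef) :
    ∃ T : Matrix n n 𝕜, T.IsLowerTriangular ∧ T * A * Tᴴ = 1 := by
  set L := LDL.lowerInv hA
  set d := LDL.diagEntries hA
  set D : Matrix n n 𝕜 := diagonal fun i => (((√(RCLike.re (d i)))⁻¹ : ℝ) : 𝕜)
  have hL : L.IsLowerTriangular := fun i j hij =>
    LDL.lowerInv_triangular hA (OrderDual.toDual_lt_toDual.mp hij)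
  refine ⟨D * L, (blockTriangular_diagonal _).mul hL, ?_⟩
  calc
    D * L * A * (D * L)ᴴ = D * (L * A * Lᴴ) * Dᴴ := by
      simp only [conjTranspose_mul, Matrix.mul_assoc]
    _ = D * diagonal d * Dᴴ := by rw [← LDL.diag_eq_lowerInv_conj, LDL.diag]
    _ = 1 := by
      rw [diagonal_conjTranspose, diagonal_mul_diagonal, diagonal_mul_diagonal, ← diagonal_one]
      congr 1
      ext i
      obtain ⟨r, hr, hrd⟩ := RCLike.pos_iff_exists_ofReal.mp (ldl_diagEntries_pos hA i)
      have hd : d i = (r : 𝕜) := hrd.symm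
      rw [Pi.star_apply, RCLike.star_def, RCLike.conj_ofReal, hd, RCLike.ofReal_re]
      norm_cast
      have : 0 < √r := Real.sqrt_pos.mpr hr
      field_simp
      exact (Real.sq_sqrt hr.le).symm

lemma exists_isLowerTriangular_mul_mem_unitaryGroup {M : Matrix n n 𝕜} (hM : IsUnit M) :
    ∃ T : Matrix n n 𝕜, T.IsLowerTriangular ∧ T * M ∈ unitaryGroup n 𝕜 := by
  obtain ⟨T, hT, hTM⟩ := exists_isLowerTriangular_conj_eq_one
    (PosDef.mul_conjTranspose_self M (vecMul_injective_of_isUnit hM))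
  refine ⟨T, hT, mem_unitaryGroup_iff.mpr ?_⟩
  rw [← hTM, star_eq_conjTranspose, conjTranspose_mul]
  simp only [Matrix.mul_assoc]

end Orthogonalization

section OrthogonalGroup

instance {m n R : Type*} [Countable m] [Countable n] [TopologicalSpace R]
    [SecondCountableTopology R] : SecondCountableTopology (Matrix m n R) :=
  inferInstanceAs (SecondCountableTopology (m → n → R))

variable {n : Type*} [Fintype n]

instance : BorelSpace (Matrix n n ℝ) := inferInstanceAs (BorelSpace (n → n → ℝ))

variable [DecidableEq n]

instance : BorelSpace (orthogonalGroup n ℝ) :=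
  Subtype.borelSpace (orthogonalGroup n ℝ : Set (Matrix n n ℝ))

instance : SecondCountableTopology (orthogonalGroup n ℝ) :=
  TopologicalSpace.Subtype.secondCountableTopology (orthogonalGroup n ℝ : Set (Matrix n n ℝ))

instance : CompactSpace (orthogonalGroup n ℝ) := by
  refine isCompact_iff_compactSpace (s := (orthogonalGroup n ℝ : Set (Matrix n n ℝ))).mp ?_
  refine (isCompact_closedBall (0 : ℝ) 1).matrix.of_isClosed_subset isClosed_unitary ?_
  intro U hU i j
  exact mem_closedBall_zero_iff.mpr (entry_norm_bound_of_unitary hU i j)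

lemma isUnit_orthogonalGroup_coe (k : orthogonalGroup n ℝ) : IsUnit k.1 :=
  (Group.isUnit k).map (orthogonalGroup n ℝ).subtype

lemma det_orthogonal_conj (k : orthogonalGroup n ℝ) (A : Matrix n n ℝ) :
    (k.1 * A * k.1ᵀ).det = A.det := by
  rw [det_mul_right_comm, (mem_orthogonalGroup_iff n ℝ).mp k.2, one_mul]

end OrthogonalGroup

section MinorPower

variable {ι n : Type*} [Fintype ι] {S : ι → Finset n}

/-- The generalized power function `A ↦ ∏ᵢ |Δᵢ(A)| ^ (e i)`, where `Δᵢ` is the principal minor on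
`S i`; when the `S i` are lower sets these are the leading minors. The absolute values make it
meaningful for every real matrix. -/
def minorPower [DecidableEq n] (S : ι → Finset n) (e : ι → ℂ) (A : Matrix n n ℝ) : ℂ :=
  ∏ i, cpw |principalMinor (S i) A| (e i)

section

variable [DecidableEq n]

lemma minorPower_one (S : ι → Finset n) (e : ι → ℂ) : minorPower S e 1 = 1 := by
  simp [minorPower, principalMinor_one, cpw_one]

lemma measurable_minorPower [Fintype n] (S : ι → Finset n) (e : ι → ℂ) :
    Measurable (minorPower S e) :=
  Finset.measurable_prod _ fun i _ =>
    (measurable_cpw _).comp (continuous_principalMinor (S i)).abs.measurable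

lemma continuousAt_minorPower (e : ι → ℂ) {A : Matrix n n ℝ}
    (hA : ∀ i, principalMinor (S i) A ≠ 0) : ContinuousAt (minorPower S e) A :=
  tendsto_finsetProd _ fun i _ => (continuousAt_cpw (abs_ne_zero.mpr (hA i)) (e i)).comp
    (f := fun B => |principalMinor (S i) B|) (continuous_principalMinor (S i)).abs.continuousAt

variable [Fintype n] {e : ι → ℂ} (μ : Measure (orthogonalGroup n ℝ)) [IsFiniteMeasure μ]

lemma integrable_minorPower_conj_of_posDef (e : ι → ℂ) {A : Matrix n n ℝ} (hA : A.PosDef) :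
    Integrable (fun k : orthogonalGroup n ℝ => minorPower S e (k.1 * A * k.1ᵀ)) μ := by
  have hconj (k : orthogonalGroup n ℝ) : (k.1 * A * k.1ᵀ).PosDef :=
    hA.mul_mul_conjTranspose_same (vecMul_injective_of_isUnit (isUnit_orthogonalGroup_coe k))
  refine Continuous.integrable_of_hasCompactSupport (continuous_iff_continuousAt.mpr fun k => ?_)
    (HasCompactSupport.of_compactSpace _)
  refine (continuousAt_minorPower e fun i => ?_).comp
    (f := fun k : orthogonalGroup n ℝ => k.1 * A * k.1ᵀ) (by fun_prop)
  exact (principalMinor_pos_of_posDef (hconj k) (S i)).ne'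

lemma exists_norm_cpw_principalMinor_conj_le {S : Finset n} {w : ℂ}
    (h : S = Finset.univ ∨ 0 ≤ w.re) (A : Matrix n n ℝ) :
    ∃ C, ∀ k : orthogonalGroup n ℝ, ‖cpw |principalMinor S (k.1 * A * k.1ᵀ)| w‖ ≤ C := by
  rcases h with rfl | hw
  · refine ⟨‖cpw |A.det| w‖, fun k => ?_⟩
    rw [principalMinor_univ, det_orthogonal_conj]
  · have hcont : Continuous fun k : orthogonalGroup n ℝ => principalMinor S (k.1 * A * k.1ᵀ) :=
      (continuous_principalMinor S).comp (by fun_prop)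
    obtain ⟨B, hB⟩ := isCompact_univ.exists_bound_of_continuousOn hcont.continuousOn
    refine ⟨B ^ w.re, fun k => ?_⟩
    rw [cpw_abs]
    exact (norm_cpw_le _ w).trans
      (Real.rpow_le_rpow (abs_nonneg _) (hB k (Set.mem_univ k)) hw)

lemma integrable_minorPower_conj (h : ∀ i, S i = Finset.univ ∨ 0 ≤ (e i).re)
    (A : Matrix n n ℝ) :
    Integrable (fun k : orthogonalGroup n ℝ => minorPower S e (k.1 * A * k.1ᵀ)) μ := by
  choose C hC using fun i => exists_norm_cpw_principalMinor_conj_le (h i) A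
  refine Integrable.of_bound ?_ (∏ i, C i) (ae_of_all _ fun k => ?_)
  · have hconj : Continuous fun k : orthogonalGroup n ℝ => k.1 * A * k.1ᵀ := by fun_prop
    exact ((measurable_minorPower S e).comp hconj.measurable).aestronglyMeasurable
  · rw [minorPower, norm_prod]
    exact Finset.prod_le_prod (fun _ _ => norm_nonneg _) fun i _ => hC i k

end

variable [Fintype n] [LinearOrder n]

lemma minorPower_conj_of_isLowerTriangular (hS : ∀ i, IsLowerSet (S i : Set n)) (e : ι → ℂ)
    {T : Matrix n n ℝ} (hT : T.IsLowerTriangular) (A : Matrix n n ℝ) :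
    minorPower S e (T * A * Tᵀ) = minorPower S e (T * Tᵀ) * minorPower S e A := by
  have hone (i : ι) : principalMinor (S i) (T * Tᵀ) = principalMinor (S i) T ^ 2 := by
    simpa [principalMinor_one] using principalMinor_conj_of_isLowerTriangular (hS i) hT 1
  simp only [minorPower, ← Finset.prod_mul_distrib, hone,
    principalMinor_conj_of_isLowerTriangular (hS _) hT, abs_mul, cpw_mul]

variable [LocallyFiniteOrderBot n]

lemma exists_minorPower_conj_eq_mul (hS : ∀ i, IsLowerSet (S i : Set n)) (e : ι → ℂ)
    {M : Matrix n n ℝ} (hM : IsUnit M) :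
    ∃ q : orthogonalGroup n ℝ, ∀ A, minorPower S e (M * A * Mᵀ) =
      minorPower S e (M * Mᵀ) * minorPower S e (q.1 * A * q.1ᵀ) := by
  obtain ⟨T, hT, hq⟩ := exists_isLowerTriangular_mul_mem_unitaryGroup hM
  refine ⟨⟨T * M, hq⟩, fun A => ?_⟩
  have hconj (B : Matrix n n ℝ) : minorPower S e (T * M * B * (T * M)ᵀ) =
      minorPower S e (T * Tᵀ) * minorPower S e (M * B * Mᵀ) := by
    rw [← minorPower_conj_of_isLowerTriangular hS e hT, transpose_mul]
    simp only [Matrix.mul_assoc]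
  have hone : minorPower S e (T * Tᵀ) * minorPower S e (M * Mᵀ) = 1 := by
    rw [← minorPower_one S e, ← (mem_orthogonalGroup_iff n ℝ).mp hq]
    simpa using (hconj 1).symm
  rw [hconj]
  linear_combination (-minorPower S e (M * A * Mᵀ)) * hone

variable {e : ι → ℂ} {μ : Measure (orthogonalGroup n ℝ)} [μ.IsMulLeftInvariant]
  {M : Matrix n n ℝ}

lemma exists_minorPower_conj_orthogonal_conj (hS : ∀ i, IsLowerSet (S i : Set n)) (e : ι → ℂ)
    (hM : IsUnit M) (X : Matrix n n ℝ) :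
    ∃ q : orthogonalGroup n ℝ, ∀ k : orthogonalGroup n ℝ,
      minorPower S e (M * (k.1 * X * k.1ᵀ) * Mᵀ) =
        minorPower S e (M * Mᵀ) * minorPower S e ((q * k).1 * X * (q * k).1ᵀ) := by
  obtain ⟨q, hq⟩ := exists_minorPower_conj_eq_mul hS e hM
  refine ⟨q, fun k => ?_⟩
  rw [hq, Submonoid.coe_mul, transpose_mul]
  simp only [Matrix.mul_assoc]

lemma integrable_minorPower_conj_orthogonal_conj (hS : ∀ i, IsLowerSet (S i : Set n))
    (hM : IsUnit M) {X : Matrix n n ℝ}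
    (hX : Integrable (fun k : orthogonalGroup n ℝ => minorPower S e (k.1 * X * k.1ᵀ)) μ) :
    Integrable (fun k : orthogonalGroup n ℝ => minorPower S e (M * (k.1 * X * k.1ᵀ) * Mᵀ)) μ := by
  obtain ⟨q, hq⟩ := exists_minorPower_conj_orthogonal_conj hS e hM X
  simpa only [hq] using (hX.comp_mul_left q).const_mul (minorPower S e (M * Mᵀ))

lemma integral_minorPower_conj_orthogonal_conj (hS : ∀ i, IsLowerSet (S i : Set n))
    (hM : IsUnit M) (X : Matrix n n ℝ) :
    ∫ k : orthogonalGroup n ℝ, minorPower S e (M * (k.1 * X * k.1ᵀ) * Mᵀ) ∂μ =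
      minorPower S e (M * Mᵀ) *
        ∫ k : orthogonalGroup n ℝ, minorPower S e (k.1 * X * k.1ᵀ) ∂μ := by
  obtain ⟨q, hq⟩ := exists_minorPower_conj_orthogonal_conj hS e hM X
  simp only [hq]
  rw [integral_const_mul,
    integral_mul_left_eq_self (fun k : orthogonalGroup n ℝ => minorPower S e (k.1 * X * k.1ᵀ)) q]

lemma integral_norm_minorPower_conj_orthogonal_conj (hS : ∀ i, IsLowerSet (S i : Set n))
    (hM : IsUnit M) (X : Matrix n n ℝ) :
    ∫ k : orthogonalGroup n ℝ, ‖minorPower S e (M * (k.1 * X * k.1ᵀ) * Mᵀ)‖ ∂μ =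
      ‖minorPower S e (M * Mᵀ)‖ *
        ∫ k : orthogonalGroup n ℝ, ‖minorPower S e (k.1 * X * k.1ᵀ)‖ ∂μ := by
  obtain ⟨q, hq⟩ := exists_minorPower_conj_orthogonal_conj hS e hM X
  simp only [hq, norm_mul]
  rw [integral_const_mul,
    integral_mul_left_eq_self (fun k : orthogonalGroup n ℝ => ‖minorPower S e (k.1 * X * k.1ᵀ)‖) q]

variable [IsFiniteMeasure μ] {g X : Matrix n n ℝ}

lemma integrable_prod_minorPower_conj (hS : ∀ i, IsLowerSet (S i : Set n)) (hg : IsUnit g)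
    (hX : Integrable (fun k : orthogonalGroup n ℝ => minorPower S e (k.1 * X * k.1ᵀ)) μ) :
    Integrable (fun p : orthogonalGroup n ℝ × orthogonalGroup n ℝ =>
      minorPower S e (p.1.1 * g * (p.2.1 * X * p.2.1ᵀ) * (p.1.1 * g)ᵀ)) (μ.prod μ) := by
  have hunit (h : orthogonalGroup n ℝ) : IsUnit (h.1 * g) := (isUnit_orthogonalGroup_coe h).mul hg
  have hgg : (g * gᵀ).PosDef :=
    PosDef.mul_conjTranspose_self g (vecMul_injective_of_isUnit hg)
  have hcont : Continuous fun p : orthogonalGroup n ℝ × orthogonalGroup n ℝ =>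
      p.1.1 * g * (p.2.1 * X * p.2.1ᵀ) * (p.1.1 * g)ᵀ := by fun_prop
  have hmeas := ((measurable_minorPower S e).comp hcont.measurable).aestronglyMeasurable
    (μ := μ.prod μ)
  refine (integrable_prod_iff hmeas).mpr ⟨ae_of_all _ fun h => ?_, ?_⟩
  · exact integrable_minorPower_conj_orthogonal_conj hS (hunit h) hX
  · simp only [Function.comp_apply, integral_norm_minorPower_conj_orthogonal_conj hS (hunit _)]
    simpa only [transpose_mul, Matrix.mul_assoc] using
      (integrable_minorPower_conj_of_posDef μ e hgg).norm.mul_const _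

theorem spherical_factorization_Phi_general (hS : ∀ i, IsLowerSet (S i : Set n)) (hg : IsUnit g)
    (hX : Integrable (fun k : orthogonalGroup n ℝ => minorPower S e (k.1 * X * k.1ᵀ)) μ) :
    ∫ k : orthogonalGroup n ℝ, ∫ h : orthogonalGroup n ℝ,
        minorPower S e (h.1 * (g * k.1 * X * k.1ᵀ * gᵀ) * h.1ᵀ) ∂μ ∂μ =
      (∫ h : orthogonalGroup n ℝ, minorPower S e (h.1 * (g * gᵀ) * h.1ᵀ) ∂μ) *
        ∫ k : orthogonalGroup n ℝ, minorPower S e (k.1 * X * k.1ᵀ) ∂μ := by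
  have hunit (h : orthogonalGroup n ℝ) : IsUnit (h.1 * g) := (isUnit_orthogonalGroup_coe h).mul hg
  have hregroup (h k : orthogonalGroup n ℝ) : h.1 * (g * k.1 * X * k.1ᵀ * gᵀ) * h.1ᵀ =
      h.1 * g * (k.1 * X * k.1ᵀ) * (h.1 * g)ᵀ := by
    simp only [transpose_mul, Matrix.mul_assoc]
  simp only [hregroup]
  rw [← integral_integral_swap (integrable_prod_minorPower_conj hS hg hX), ← integral_mul_const]
  simp only [integral_minorPower_conj_orthogonal_conj hS (hunit _)]
  simp only [transpose_mul, Matrix.mul_assoc]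

end MinorPower

/-- The first `m` elements of `Fin N`, indexing the upper-left `m × m` block. -/
def leadingIndices {N : ℕ} (m : ℕ) : Finset (Fin N) := {i | i.val < m}

lemma mem_leadingIndices {N m : ℕ} {i : Fin N} : i ∈ leadingIndices m ↔ i.val < m := by
  simp [leadingIndices]

lemma isLowerSet_leadingIndices {N : ℕ} (m : ℕ) :
    IsLowerSet ((leadingIndices m : Finset (Fin N)) : Set (Fin N)) := by
  intro i j hji hi
  rw [Finset.mem_coe, mem_leadingIndices] at hi ⊢
  exact (Fin.le_def.mp hji).trans_lt hi

lemma leadingIndices_eq_univ (N : ℕ) : leadingIndices N = (Finset.univ : Finset (Fin N)) := by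
  ext i
  simp [mem_leadingIndices]

lemma det_submatrix_castLE {R : Type*} [CommRing R] {m N : ℕ} (h : m ≤ N)
    (A : Matrix (Fin N) (Fin N) R) :
    (A.submatrix (Fin.castLE h) (Fin.castLE h)).det = principalMinor (leadingIndices m) A :=
  det_submatrix_equiv_self
    ((Fin.castLEquiv h).trans (Equiv.subtypeEquivRight fun _ => mem_leadingIndices.symm))
    (A.submatrix Subtype.val Subtype.val)

lemma sphInt_eq_integral_minorPower (n : ℕ) (μ : Measure (OG (2 * n))) (s : Fin n → ℂ)
    (X : Matrix (Fin (2 * n)) (Fin (2 * n)) ℝ) :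
    sphInt n μ s X = ∫ k : OG (2 * n),
      minorPower (fun j : Fin n => leadingIndices (2 * (j.val + 1))) (expo n s)
        (k.1 * X * k.1ᵀ) ∂μ := by
  simp only [sphInt, minorPower, det_submatrix_castLE, cpw_abs]

lemma expo_re_nonneg {n : ℕ} {s : Fin n → ℂ} {j : Fin n} (h : j.val + 1 < n)
    (hre : 2 ≤ (s j - s ⟨j.val + 1, h⟩).re) : 0 ≤ (expo n s j).re := by
  have hexpo : (expo n s j).re = (s j - s ⟨j.val + 1, h⟩).re / 2 - 1 := by
    simp [expo, dif_pos h]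
  linarith

lemma leadingIndices_eq_univ_or_expo_re_nonneg {n : ℕ} {s : Fin n → ℂ}
    (hre : ∀ j : Fin n, ∀ h : j.val + 1 < n, 2 ≤ (s j - s ⟨j.val + 1, h⟩).re) (j : Fin n) :
    (leadingIndices (2 * (j.val + 1)) : Finset (Fin (2 * n))) = Finset.univ ∨
      0 ≤ (expo n s j).re := by
  rcases Nat.lt_or_eq_of_le (Nat.succ_le_of_lt j.isLt) with h | h
  · exact Or.inr (expo_re_nonneg h (hre j h))
  · rw [show 2 * (j.val + 1) = 2 * n by omega]
    exact Or.inl (leadingIndices_eq_univ _)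

/-- Lemma 2.5, Eq. (2.14): factorization
`∫_K f_n(s, g k X kᵀ gᵀ) d*k = Ψ_n(s, ggᵀ) f_n(s, X)`. -/
theorem spherical_factorization_Phi (n : ℕ) (hn : 1 ≤ n)
    (μ : Measure (OG (2 * n))) (hμ : μ.IsHaarMeasure) (hμ1 : IsProbabilityMeasure μ)
    (g : Matrix (Fin (2 * n)) (Fin (2 * n)) ℝ) (hg : IsUnit g)
    (X : Matrix (Fin (2 * n)) (Fin (2 * n)) ℝ) (hX : Xᵀ = -X)
    (s : Fin n → ℂ)
    (hre : ∀ j : Fin n, ∀ h : j.val + 1 < n, 2 ≤ (s j - s ⟨j.val + 1, h⟩).re) :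
    (∫ k : OG (2 * n),
        sphInt n μ s (g * (k : Matrix (Fin (2 * n)) (Fin (2 * n)) ℝ) * X *
          (k : Matrix (Fin (2 * n)) (Fin (2 * n)) ℝ)ᵀ * gᵀ) ∂μ) =
      sphInt n μ s (g * gᵀ) * sphInt n μ s X := by
  simp only [sphInt_eq_integral_minorPower]
  exact spherical_factorization_Phi_general (fun _ => isLowerSet_leadingIndices _) hg
    (integrable_minorPower_conj μ (leadingIndices_eq_univ_or_expo_re_nonneg hre) X)

end
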